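/- Assume α ∈ [1/2, 1) and that W additionally satisfies W(x,y) ≥ c_*((x/y)^α + (y/x)^α) for some c_* > 0 and all x,y > 0. Then there exist ε_* > 0 and a constant c_α > 0 such that for every ε ∈ (0, ε_*], every normalised self-similar profile φ_ε for K_ε, every x ∈ (0,1] and every τ > 0: Φ[φ_ε](x) − Φ[φ_ε](x+τ) ≥ c_α ε x^{−α} if τ ≥ x, and Φ[φ_ε](x) − Φ[φ_ε](x+τ) ≥ c_α ε x^{−1−α} τ if τ ≤ x. -/

import Mathlib

open MeasureTheory Real Set Filter

noncomputable def weight (a b x : ℝ) : ℝ := if x ≤ 1 then x ^ a else x ^ b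

noncomputable def Xnorm (a b : ℝ) (g : ℝ → ℝ) : ℝ :=
  ∫ x in Ioi (0:ℝ), |g x| * weight a b x

def MemX (a b : ℝ) (g : ℝ → ℝ) : Prop :=
  IntegrableOn (fun x => g x * weight a b x) (Ioi 0)

noncomputable def Kern (ε : ℝ) (W : ℝ → ℝ → ℝ) (x y : ℝ) : ℝ := 2 + ε * W x y

def GoodW (α : ℝ) (W : ℝ → ℝ → ℝ) : Prop :=
  ContinuousOn (fun p : ℝ × ℝ => W p.1 p.2) (Ioi 0 ×ˢ Ioi 0) ∧
  (∀ x y : ℝ, 0 < x → 0 < y → W x y = W y x) ∧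
  (∀ l x y : ℝ, 0 < l → 0 < x → 0 < y → W (l * x) (l * y) = W x y) ∧
  (∀ x y : ℝ, 0 < x → 0 < y → 0 ≤ W x y ∧ W x y ≤ (x / y) ^ α + (y / x) ^ α)

def IsProfile (K : ℝ → ℝ → ℝ) (φ : ℝ → ℝ) : Prop :=
  LocallyIntegrableOn φ (Ioi 0) ∧
  (∀ᵐ x ∂(volume.restrict (Ioi (0:ℝ))), 0 ≤ φ x) ∧
  IntegrableOn (fun x => x * φ x) (Ioi 0) ∧
  (∀ᵐ x ∂(volume.restrict (Ioi (0:ℝ))),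
    x ^ 2 * φ x = ∫ y in Ioo 0 x, ∫ z in Ioi (x - y), y * K y z * φ y * φ z)

def IsNormalised (φ : ℝ → ℝ) : Prop := ∫ x in Ioi (0:ℝ), x * φ x = 1

noncomputable def betaW (W : ℝ → ℝ → ℝ) (φ : ℝ → ℝ) (x : ℝ) : ℝ :=
  ∫ z in Ioi (0:ℝ), W x z * φ z

noncomputable def Phi (ε : ℝ) (W : ℝ → ℝ → ℝ) (φ : ℝ → ℝ) (x : ℝ) : ℝ :=
  ε * ∫ y in Ioi x, betaW W φ y / y * exp (-y)

noncomputable def nuM (φ : ℝ → ℝ) : Measure ℝ :=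
  (volume.restrict (Ioi (0:ℝ))).withDensity (fun x => ENNReal.ofReal (φ x))

instance nuM_sfinite (φ : ℝ → ℝ) : SFinite (nuM φ) := by
  unfold nuM; infer_instance

noncomputable def JJ (K : ℝ → ℝ → ℝ) (φ : ℝ → ℝ) (x : ℝ) : ENNReal :=
  ∫⁻ y, ∫⁻ z, (if y < x ∧ x < y + z then ENNReal.ofReal (y * K y z) else 0) ∂(nuM φ) ∂(nuM φ)

noncomputable def MM (φ : ℝ → ℝ) (p : ℝ) : ENNReal := ∫⁻ x, ENNReal.ofReal (x ^ p) ∂(nuM φ)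

structure Core (α ε cs : ℝ) (W : ℝ → ℝ → ℝ) (φ : ℝ → ℝ) : Prop where
  a0 : 0 < α
  a1 : α < 1
  e0 : 0 < ε
  c0 : 0 < cs
  mW : Measurable (Function.uncurry W)
  mφ : Measurable φ
  φ0 : ∀ x, 0 ≤ φ x
  W0 : ∀ x y : ℝ, 0 < x → 0 < y → 0 ≤ W x y
  up : ∀ x y : ℝ, 0 < x → 0 < y → W x y ≤ (x / y) ^ α + (y / x) ^ α
  low : ∀ x y : ℝ, 0 < x → 0 < y → cs * ((x / y) ^ α + (y / x) ^ α) ≤ W x y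
  mass : ∫⁻ x, ENNReal.ofReal x ∂(nuM φ) = 1
  eqn : ∀ᵐ x ∂(volume.restrict (Ioi (0:ℝ))), x ^ 2 * φ x = (JJ (Kern ε W) φ x).toReal

theorem ae_pos_nu (φ : ℝ → ℝ) : ∀ᵐ x ∂(nuM φ), 0 < x := by
  have h : ∀ᵐ x ∂(volume.restrict (Ioi (0:ℝ))), 0 < x := ae_restrict_mem measurableSet_Ioi
  exact (withDensity_absolutelyContinuous _ _).ae_le h

theorem lint_nu {φ : ℝ → ℝ} (mφ : Measurable φ) {g : ℝ → ENNReal} (hg : Measurable g) :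
    ∫⁻ x, g x ∂(nuM φ) = ∫⁻ x in Ioi (0:ℝ), ENNReal.ofReal (φ x) * g x := by
  unfold nuM
  rw [lintegral_withDensity_eq_lintegral_mul _ mφ.ennreal_ofReal hg]
  rfl

theorem meas_kk {K : ℝ → ℝ → ℝ} (hK : Measurable (Function.uncurry K)) :
    Measurable (fun p : ℝ × ℝ × ℝ => if p.2.1 < p.1 ∧ p.1 < p.2.1 + p.2.2 then
      ENNReal.ofReal (p.2.1 * K p.2.1 p.2.2) else 0) := by
  refine Measurable.ite ?_ ?_ measurable_const
  · have h1 : Measurable (fun p : ℝ × ℝ × ℝ => p.2.1) := by fun_prop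
    have h2 : Measurable (fun p : ℝ × ℝ × ℝ => p.2.1 + p.2.2) := by fun_prop
    exact (measurableSet_lt h1 measurable_fst).inter (measurableSet_lt measurable_fst h2)
  · have : Measurable (fun p : ℝ × ℝ × ℝ => K p.2.1 p.2.2) := hK.comp measurable_snd
    exact ((measurable_fst.comp measurable_snd).mul this).ennreal_ofReal

theorem meas_JJ {K : ℝ → ℝ → ℝ} (hK : Measurable (Function.uncurry K)) (φ : ℝ → ℝ) :
    Measurable (JJ K φ) := by
  unfold JJ
  have h := meas_kk hK
  have h2 : Measurable (fun p : ℝ × ℝ => ∫⁻ z, (if p.2 < p.1 ∧ p.1 < p.2 + z then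
      ENNReal.ofReal (p.2 * K p.2 z) else 0) ∂(nuM φ)) := by
    apply Measurable.lintegral_prod_right'
      (f := fun (q : (ℝ × ℝ) × ℝ) => if q.1.2 < q.1.1 ∧ q.1.1 < q.1.2 + q.2 then
      ENNReal.ofReal (q.1.2 * K q.1.2 q.2) else 0)
    exact h.comp (by fun_prop : Measurable (fun q : (ℝ × ℝ) × ℝ => (q.1.1, q.1.2, q.2)))
  exact h2.lintegral_prod_right

/-- Tonelli master identity. -/
theorem master {K : ℝ → ℝ → ℝ} (hK : Measurable (Function.uncurry K)) (φ : ℝ → ℝ)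
    {g : ℝ → ENNReal} (hg : Measurable g) :
    ∫⁻ x, g x * JJ K φ x = ∫⁻ y, ∫⁻ z, ENNReal.ofReal (y * K y z) *
      (∫⁻ x in Ioo y (y + z), g x) ∂(nuM φ) ∂(nuM φ) := by
  have h := meas_kk hK
  have hgk : Measurable (fun p : ℝ × ℝ × ℝ => g p.1 * (if p.2.1 < p.1 ∧ p.1 < p.2.1 + p.2.2 then
      ENNReal.ofReal (p.2.1 * K p.2.1 p.2.2) else 0)) := (hg.comp measurable_fst).mul h
  have h2 : Measurable (fun p : ℝ × ℝ => ∫⁻ z, g p.1 * (if p.2 < p.1 ∧ p.1 < p.2 + z then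
      ENNReal.ofReal (p.2 * K p.2 z) else 0) ∂(nuM φ)) := by
    apply Measurable.lintegral_prod_right'
      (f := fun (q : (ℝ × ℝ) × ℝ) => g q.1.1 * (if q.1.2 < q.1.1 ∧ q.1.1 < q.1.2 + q.2 then
      ENNReal.ofReal (q.1.2 * K q.1.2 q.2) else 0))
    exact hgk.comp (by fun_prop : Measurable (fun q : (ℝ × ℝ) × ℝ => (q.1.1, q.1.2, q.2)))
  have e1 : ∀ x, g x * JJ K φ x = ∫⁻ y, ∫⁻ z, g x * (if y < x ∧ x < y + z then
      ENNReal.ofReal (y * K y z) else 0) ∂(nuM φ) ∂(nuM φ) := by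
    intro x
    unfold JJ
    have hx : ∀ y, Measurable (fun z => (if y < x ∧ x < y + z then
      ENNReal.ofReal (y * K y z) else 0)) := fun y =>
        h.comp (by fun_prop : Measurable (fun z : ℝ => (x, y, z)))
    rw [← lintegral_const_mul]
    · congr 1; ext y
      rw [← lintegral_const_mul _ (hx y)]
    · apply Measurable.lintegral_prod_right'
        (f := fun (q : ℝ × ℝ) => (if q.1 < x ∧ x < q.1 + q.2 then
          ENNReal.ofReal (q.1 * K q.1 q.2) else 0))
      exact h.comp (by fun_prop : Measurable (fun q : ℝ × ℝ => (x, q.1, q.2)))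
  simp_rw [e1]
  rw [lintegral_lintegral_swap h2.aemeasurable]
  congr 1; ext y
  rw [lintegral_lintegral_swap]
  swap
  · exact (hgk.comp (by fun_prop : Measurable (fun q : ℝ × ℝ => (q.1, y, q.2)))).aemeasurable
  congr 1; ext z
  rw [← lintegral_const_mul _ hg, ← lintegral_indicator measurableSet_Ioo]
  congr 1; ext x
  by_cases hx : y < x ∧ x < y + z
  · rw [if_pos hx, indicator_of_mem (show x ∈ Ioo y (y+z) from hx), mul_comm]
  · rw [if_neg hx, indicator_of_notMem (show x ∉ Ioo y (y+z) from hx), mul_zero]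

theorem Core.mK {α ε cs : ℝ} {W : ℝ → ℝ → ℝ} {φ : ℝ → ℝ} (c : Core α ε cs W φ) :
    Measurable (Function.uncurry (Kern ε W)) := by
  have := c.mW
  have h : Function.uncurry (Kern ε W) = fun p => 2 + ε * Function.uncurry W p := by
    ext p; rfl
  rw [h]; fun_prop

theorem JJ_nonpos (K : ℝ → ℝ → ℝ) (φ : ℝ → ℝ) {x : ℝ} (hx : x ≤ 0) : JJ K φ x = 0 := by
  unfold JJ
  rw [lintegral_eq_zero_of_ae_eq_zero]
  filter_upwards [ae_pos_nu φ] with y hy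
  have : ∀ z, ¬ (y < x ∧ x < y + z) := fun z h => by linarith [h.1]
  simp [this]

/-- Weak form, given finiteness of JJ a.e. -/
theorem Core.weak {α ε cs : ℝ} {W : ℝ → ℝ → ℝ} {φ : ℝ → ℝ} (c : Core α ε cs W φ)
    (hJ : ∀ᵐ x ∂(volume.restrict (Ioi (0:ℝ))), JJ (Kern ε W) φ x ≠ ⊤)
    {g : ℝ → ENNReal} (hg : Measurable g) :
    ∫⁻ x, g x * ENNReal.ofReal (x ^ 2) ∂(nuM φ) =
     ∫⁻ y, ∫⁻ z, ENNReal.ofReal (y * Kern ε W y z) *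
      (∫⁻ x in Ioo y (y + z), g x) ∂(nuM φ) ∂(nuM φ) := by
  rw [← master c.mK φ hg, lint_nu c.mφ (by fun_prop)]
  have : ∫⁻ x, g x * JJ (Kern ε W) φ x = ∫⁻ x in Ioi 0, g x * JJ (Kern ε W) φ x := by
    rw [← lintegral_indicator measurableSet_Ioi]
    congr 1; ext x
    by_cases hx : 0 < x
    · rw [indicator_of_mem (show x ∈ Ioi (0:ℝ) from hx)]
    · rw [indicator_of_notMem (show x ∉ Ioi (0:ℝ) from hx), JJ_nonpos _ _ (not_lt.1 hx), mul_zero]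
  rw [this]
  apply lintegral_congr_ae
  filter_upwards [c.eqn, hJ] with x h1 h2
  rw [← ENNReal.ofReal_toReal h2, ← h1, ENNReal.ofReal_mul (sq_nonneg x)]
  ring

theorem lint_prod (ν : Measure ℝ) (c : ENNReal) {a b : ℝ → ENNReal} (ha : Measurable a)
    (hb : Measurable b) :
    ∫⁻ y, ∫⁻ z, c * (a y * b z) ∂ν ∂ν = c * ((∫⁻ y, a y ∂ν) * ∫⁻ z, b z ∂ν) := by
  have h1 : ∀ y, ∫⁻ z, c * (a y * b z) ∂ν = c * (a y * ∫⁻ z, b z ∂ν) := by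
    intro y
    rw [lintegral_const_mul _ (hb.const_mul _), lintegral_const_mul _ hb]
  simp_rw [h1]
  rw [lintegral_const_mul _ (ha.mul_const _), lintegral_mul_const _ ha]

theorem low_int (φ : ℝ → ℝ) (F : ℝ → ℝ → ENNReal) (x δ : ℝ) {h : ℝ → ENNReal} (hh : Measurable h)
    (H : ∀ y z, 0 < y → y < x → δ < z → h y ≤ F y z) :
    nuM φ (Ioi δ) * ∫⁻ y in Iio x, h y ∂(nuM φ) ≤ ∫⁻ y, ∫⁻ z, F y z ∂(nuM φ) ∂(nuM φ) := by
  rw [← lintegral_const_mul _ hh]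
  refine le_trans ?_ (setLIntegral_le_lintegral (Iio x) _)
  apply lintegral_mono_ae
  filter_upwards [ae_restrict_mem measurableSet_Iio, ae_restrict_of_ae (ae_pos_nu φ)] with y hy hy0
  refine le_trans ?_ (setLIntegral_le_lintegral (Ioi δ) _)
  rw [mul_comm, ← setLIntegral_const]
  apply setLIntegral_mono_ae' measurableSet_Ioi
  exact Eventually.of_forall fun z hz => H y z hy0 hy hz

theorem ell_const {y z : ℝ} (c : ENNReal) (g : ℝ → ENNReal)
    (h : ∀ x, y < x → g x ≤ c) : ∫⁻ x in Ioo y (y + z), g x ≤ c * ENNReal.ofReal z := by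
  calc ∫⁻ x in Ioo y (y + z), g x ≤ ∫⁻ x in Ioo y (y + z), c := by
        apply setLIntegral_mono_ae' measurableSet_Ioo
        exact Eventually.of_forall fun x hx => h x hx.1
    _ = c * ENNReal.ofReal z := by
        rw [setLIntegral_const, Real.volume_Ioo]; congr 2; ring

theorem ell_low {y z q : ℝ} (hy : 0 < y) (hz : y ≤ z) (hq : 0 ≤ q) :
    ENNReal.ofReal (y * (2 * y) ^ (-q)) ≤ ∫⁻ x in Ioo y (y + z), ENNReal.ofReal (x ^ (-q)) := by
  calc ENNReal.ofReal (y * (2 * y) ^ (-q))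
      = ∫⁻ x in Ioo y (2 * y), ENNReal.ofReal ((2 * y) ^ (-q)) := by
        rw [setLIntegral_const, Real.volume_Ioo, ← ENNReal.ofReal_mul (by positivity)]
        congr 1; ring
    _ ≤ ∫⁻ x in Ioo y (2 * y), ENNReal.ofReal (x ^ (-q)) := by
        apply setLIntegral_mono_ae' measurableSet_Ioo
        refine Eventually.of_forall fun x hx => ENNReal.ofReal_le_ofReal ?_
        exact Real.rpow_le_rpow_of_nonpos (hy.trans hx.1) hx.2.le (by linarith)
    _ ≤ _ := lintegral_mono_set (Ioo_subset_Ioo_right (by linarith))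

theorem ell_up {y z α : ℝ} (hy : 0 < y) (hz : 0 < z) (h0 : 0 < α) (h1 : α < 1) :
    ∫⁻ x in Ioo y (y + z), ENNReal.ofReal (x ^ (-α)) ≤ ENNReal.ofReal (z ^ (1 - α) / (1 - α)) := by
  have hii : IntervalIntegrable (fun x : ℝ => x ^ (-α)) volume y (y + z) :=
    intervalIntegral.intervalIntegrable_rpow' (by linarith)
  have hion : IntegrableOn (fun x : ℝ => x ^ (-α)) (Ioo y (y + z)) :=
    ((intervalIntegrable_iff_integrableOn_Ioo_of_le (by linarith)).1 hii)
  rw [← ofReal_integral_eq_lintegral_ofReal hion]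
  · apply ENNReal.ofReal_le_ofReal
    rw [← integral_Ioc_eq_integral_Ioo, ← intervalIntegral.integral_of_le (by linarith),
      integral_rpow (Or.inl (by linarith))]
    have : -α + 1 = 1 - α := by ring
    rw [this]
    have h2 := Real.rpow_add_le_add_rpow hy.le hz.le (by linarith : 0 ≤ 1 - α) (by linarith)
    have : 0 < 1 - α := by linarith
    gcongr
    linarith
  · filter_upwards [ae_restrict_mem measurableSet_Ioo] with x hx
    have : 0 < x := hy.trans hx.1
    positivity

noncomputable def gR (R : ℝ) : ℝ → ENNReal := (Ioi R).indicator (fun x => ENNReal.ofReal x⁻¹)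

theorem meas_gR (R : ℝ) : Measurable (gR R) :=
  Measurable.indicator (by fun_prop) measurableSet_Ioi

theorem ker_up {α ε cs : ℝ} {W : ℝ → ℝ → ℝ} {φ : ℝ → ℝ} (c : Core α ε cs W φ) {R : ℝ} (hR : 0 < R)
    {y z : ℝ} (hy : 0 < y) (hz : 0 < z) :
    ENNReal.ofReal (y * Kern ε W y z) * (∫⁻ x in Ioo y (y + z), gR R x) ≤
      ENNReal.ofReal (2 / R) * (ENNReal.ofReal y * ENNReal.ofReal z) +
      (ENNReal.ofReal (ε * R ^ (α - 1) / (1 - α)) *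
        (ENNReal.ofReal y * ENNReal.ofReal (z ^ (1 - α))) +
       ENNReal.ofReal (ε * R ^ (α - 1) / (1 - α)) *
        (ENNReal.ofReal (y ^ (1 - α)) * ENNReal.ofReal z)) := by
  have a0 := c.a0
  have a1 := c.a1
  have e0 := c.e0
  have b1 : 0 < 1 - α := by linarith
  set L := ∫⁻ x in Ioo y (y + z), gR R x with hL
  have l1 : L ≤ ENNReal.ofReal (R⁻¹ * z) := by
    rw [ENNReal.ofReal_mul (by positivity)]
    apply ell_const
    intro x hx
    unfold gR
    by_cases h : R < x
    · rw [indicator_of_mem (show x ∈ Ioi R from h)]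
      apply ENNReal.ofReal_le_ofReal
      gcongr
    · rw [indicator_of_notMem (show x ∉ Ioi R from h)]; exact zero_le
  have key : ∀ x, R < x → x⁻¹ ≤ R ^ (α - 1) * x ^ (-α) := by
    intro x hx
    have hx0 : 0 < x := hR.trans hx
    have : x⁻¹ = x ^ (α - 1) * x ^ (-α) := by
      rw [← Real.rpow_add hx0, ← Real.rpow_neg_one]; congr 1; ring
    rw [this]
    have := Real.rpow_le_rpow_of_nonpos hR hx.le (by linarith : α - 1 ≤ 0)
    gcongr
  have l2 : L ≤ ENNReal.ofReal (R ^ (α - 1) * y ^ (-α) * z) := by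
    rw [ENNReal.ofReal_mul (by positivity)]
    apply ell_const
    intro x hx
    unfold gR
    by_cases h : R < x
    · rw [indicator_of_mem (show x ∈ Ioi R from h)]
      apply ENNReal.ofReal_le_ofReal
      refine (key x h).trans ?_
      have := Real.rpow_le_rpow_of_nonpos hy hx.le (by linarith : -α ≤ 0)
      gcongr
    · rw [indicator_of_notMem (show x ∉ Ioi R from h)]; exact zero_le
  have l3 : L ≤ ENNReal.ofReal (R ^ (α - 1) * (z ^ (1 - α) / (1 - α))) := by
    rw [ENNReal.ofReal_mul (by positivity)]
    refine le_trans ?_ (mul_le_mul_right (ell_up hy hz a0 a1) _)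
    rw [← lintegral_const_mul _ (by fun_prop)]
    apply setLIntegral_mono_ae' measurableSet_Ioo
    refine Eventually.of_forall fun x hx => ?_
    unfold gR
    by_cases h : R < x
    · rw [indicator_of_mem (show x ∈ Ioi R from h), ← ENNReal.ofReal_mul (by positivity)]
      exact ENNReal.ofReal_le_ofReal (key x h)
    · rw [indicator_of_notMem (show x ∉ Ioi R from h)]; exact zero_le
  have hk : y * Kern ε W y z ≤ 2 * y + (ε * y * (y / z) ^ α + ε * y * (z / y) ^ α) := by
    have := c.up y z hy hz
    unfold Kern
    have : ε * y * W y z ≤ ε * y * ((y / z) ^ α + (z / y) ^ α) := by gcongr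
    linarith
  calc ENNReal.ofReal (y * Kern ε W y z) * L
      ≤ (ENNReal.ofReal (2 * y) + (ENNReal.ofReal (ε * y * (y / z) ^ α)
          + ENNReal.ofReal (ε * y * (z / y) ^ α))) * L := by
        rw [← ENNReal.ofReal_add (by positivity) (by positivity),
          ← ENNReal.ofReal_add (by positivity) (by positivity)]
        gcongr
    _ = ENNReal.ofReal (2 * y) * L + (ENNReal.ofReal (ε * y * (y / z) ^ α) * L
          + ENNReal.ofReal (ε * y * (z / y) ^ α) * L) := by ring
    _ ≤ ENNReal.ofReal (2 * y) * ENNReal.ofReal (R⁻¹ * z) +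
        (ENNReal.ofReal (ε * y * (y / z) ^ α) * ENNReal.ofReal (R ^ (α - 1) * y ^ (-α) * z)
          + ENNReal.ofReal (ε * y * (z / y) ^ α) *
            ENNReal.ofReal (R ^ (α - 1) * (z ^ (1 - α) / (1 - α)))) := by gcongr
    _ ≤ _ := by
        have hz' : z ^ (1 - α) * z ^ α = z := by
          rw [← Real.rpow_add hz]; simp
        have hy' : y ^ (1 - α) * y ^ α = y := by
          rw [← Real.rpow_add hy]; simp
        have hyp : 0 < y ^ α := by positivity
        have hzp : 0 < z ^ α := by positivity
        gcongr ?_ + (?_ + ?_)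
        · rw [← ENNReal.ofReal_mul (by positivity), ← ENNReal.ofReal_mul (by positivity),
            ← ENNReal.ofReal_mul (by positivity)]
          apply le_of_eq; congr 1; field_simp
        · rw [← ENNReal.ofReal_mul (by positivity), ← ENNReal.ofReal_mul (by positivity),
            ← ENNReal.ofReal_mul (by positivity)]
          apply ENNReal.ofReal_le_ofReal
          rw [Real.div_rpow hy.le hz.le, Real.rpow_neg hy.le]
          have e : ε * y * (y ^ α / z ^ α) * (R ^ (α - 1) * (y ^ α)⁻¹ * z)
              = ε * R ^ (α - 1) * (y * z ^ (1 - α)) := by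
            nth_rewrite 2 [← hz']
            field_simp
          rw [e]
          have : ε * R ^ (α - 1) ≤ ε * R ^ (α - 1) / (1 - α) := by
            rw [le_div_iff₀ b1]
            have : 0 < ε * R ^ (α - 1) := by positivity
            nlinarith
          gcongr
        · rw [← ENNReal.ofReal_mul (by positivity), ← ENNReal.ofReal_mul (by positivity),
            ← ENNReal.ofReal_mul (by positivity)]
          apply le_of_eq; congr 1
          rw [Real.div_rpow hz.le hy.le]
          nth_rewrite 1 [← hy']
          nth_rewrite 3 [← hz']
          field_simp

theorem MM_one {α ε cs : ℝ} {W : ℝ → ℝ → ℝ} {φ : ℝ → ℝ} (c : Core α ε cs W φ) : MM φ 1 = 1 := by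
  unfold MM; simp [c.mass]

theorem Core.upper {α ε cs : ℝ} {W : ℝ → ℝ → ℝ} {φ : ℝ → ℝ} (c : Core α ε cs W φ) {R : ℝ}
    (hR : 0 < R) :
    ∫⁻ x, gR R x * JJ (Kern ε W) φ x ≤ ENNReal.ofReal (2 / R) +
      (ENNReal.ofReal (ε * R ^ (α - 1) / (1 - α)) * MM φ (1 - α) +
        ENNReal.ofReal (ε * R ^ (α - 1) / (1 - α)) * MM φ (1 - α)) := by
  rw [master c.mK φ (meas_gR R)]
  have m1 : Measurable (fun x : ℝ => ENNReal.ofReal x) := by fun_prop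
  have m2 : Measurable (fun x : ℝ => ENNReal.ofReal (x ^ (1 - α))) := by fun_prop
  set C := ENNReal.ofReal (ε * R ^ (α - 1) / (1 - α))
  set D := ENNReal.ofReal (2 / R)
  calc _ ≤ ∫⁻ y, ∫⁻ z, (D * (ENNReal.ofReal y * ENNReal.ofReal z) +
      (C * (ENNReal.ofReal y * ENNReal.ofReal (z ^ (1 - α))) +
       C * (ENNReal.ofReal (y ^ (1 - α)) * ENNReal.ofReal z))) ∂(nuM φ) ∂(nuM φ) := by
        apply lintegral_mono_ae
        filter_upwards [ae_pos_nu φ] with y hy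
        apply lintegral_mono_ae
        filter_upwards [ae_pos_nu φ] with z hz
        exact ker_up c hR hy hz
    _ = ∫⁻ y, ((∫⁻ z, D * (ENNReal.ofReal y * ENNReal.ofReal z) ∂(nuM φ)) +
      ((∫⁻ z, C * (ENNReal.ofReal y * ENNReal.ofReal (z ^ (1 - α))) ∂(nuM φ)) +
       ∫⁻ z, C * (ENNReal.ofReal (y ^ (1 - α)) * ENNReal.ofReal z) ∂(nuM φ))) ∂(nuM φ) := by
        congr 1; ext y
        rw [lintegral_add_left (by fun_prop), lintegral_add_left (by fun_prop)]
    _ = (∫⁻ y, ∫⁻ z, D * (ENNReal.ofReal y * ENNReal.ofReal z) ∂(nuM φ) ∂(nuM φ)) +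
      ((∫⁻ y, ∫⁻ z, C * (ENNReal.ofReal y * ENNReal.ofReal (z ^ (1 - α))) ∂(nuM φ) ∂(nuM φ)) +
       ∫⁻ y, ∫⁻ z, C * (ENNReal.ofReal (y ^ (1 - α)) * ENNReal.ofReal z) ∂(nuM φ) ∂(nuM φ)) := by
        have k1 : Measurable fun y => ∫⁻ z, D * (ENNReal.ofReal y * ENNReal.ofReal z) ∂(nuM φ) :=
          Measurable.lintegral_prod_right'
            (f := fun q : ℝ × ℝ => D * (ENNReal.ofReal q.1 * ENNReal.ofReal q.2)) (by fun_prop)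
        have k2 : Measurable fun y =>
            ∫⁻ z, C * (ENNReal.ofReal y * ENNReal.ofReal (z ^ (1 - α))) ∂(nuM φ) :=
          Measurable.lintegral_prod_right'
            (f := fun q : ℝ × ℝ => C * (ENNReal.ofReal q.1 * ENNReal.ofReal (q.2 ^ (1 - α))))
            (by fun_prop)
        rw [lintegral_add_left k1, lintegral_add_left k2]
    _ = _ := by
        rw [lint_prod _ _ m1 m1, lint_prod _ _ m1 m2, lint_prod _ _ m2 m1, c.mass]
        unfold MM
        simp
theorem MM_le {α ε cs : ℝ} {W : ℝ → ℝ → ℝ} {φ : ℝ → ℝ} (c : Core α ε cs W φ) {p x : ℝ}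
    (hp : p ≤ 1) (hx : 0 < x) :
    MM φ p ≤ (∫⁻ y in Iio x, ENNReal.ofReal (y ^ p) ∂(nuM φ)) + ENNReal.ofReal (x ^ (p - 1)) := by
  unfold MM
  rw [← lintegral_add_compl _ (measurableSet_Iio (a := x)), compl_Iio]
  gcongr
  calc ∫⁻ y in Ici x, ENNReal.ofReal (y ^ p) ∂(nuM φ)
      ≤ ∫⁻ y in Ici x, ENNReal.ofReal (x ^ (p - 1)) * ENNReal.ofReal y ∂(nuM φ) := by
        apply setLIntegral_mono_ae' measurableSet_Ici
        refine Eventually.of_forall fun y hy => ?_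
        have hy' : x ≤ y := hy
        have hy0 : 0 < y := hx.trans_le hy'
        rw [← ENNReal.ofReal_mul (by positivity)]
        apply ENNReal.ofReal_le_ofReal
        have e : y ^ p = y ^ (p - 1) * y := by
          rw [← Real.rpow_add_one hy0.ne']; congr 1; ring
        rw [e]
        have := Real.rpow_le_rpow_of_nonpos hx hy' (by linarith : p - 1 ≤ 0)
        gcongr
    _ ≤ ∫⁻ y, ENNReal.ofReal (x ^ (p - 1)) * ENNReal.ofReal y ∂(nuM φ) :=
        setLIntegral_le_lintegral _ _
    _ = _ := by rw [lintegral_const_mul _ (by fun_prop), c.mass, mul_one]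

theorem exists_delta {α ε cs : ℝ} {W : ℝ → ℝ → ℝ} {φ : ℝ → ℝ} (c : Core α ε cs W φ) :
    ∃ δ : ℝ, 0 < δ ∧ nuM φ (Ioi δ) ≠ 0 := by
  by_contra! h
  have h1 : nuM φ (⋃ n : ℕ, Ioi (1 / ((n : ℝ) + 1))) = 0 :=
    measure_iUnion_null fun n => h _ (by positivity)
  have h2 : ∀ᵐ x ∂(nuM φ), x ∉ ⋃ n : ℕ, Ioi (1 / ((n : ℝ) + 1)) := by
    rw [ae_iff]; simp only [not_not]; exact h1
  have h3 : ∀ᵐ x ∂(nuM φ), False := by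
    filter_upwards [h2, ae_pos_nu φ] with x hx hx0
    obtain ⟨n, hn⟩ := exists_nat_one_div_lt hx0
    exact hx (mem_iUnion.2 ⟨n, hn⟩)
  have := c.mass
  rw [lintegral_eq_zero_of_ae_eq_zero (h3.mono fun x hx => hx.elim)] at this
  exact zero_ne_one this

theorem ker_low {α ε cs : ℝ} {W : ℝ → ℝ → ℝ} {φ : ℝ → ℝ} (c : Core α ε cs W φ) {δ y z : ℝ}
    (hδ : 0 < δ) (hy : 0 < y) (hz : δ < z) :
    ENNReal.ofReal (ε * cs * δ ^ α) * ENNReal.ofReal (y ^ (1 - α)) ≤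
      ENNReal.ofReal (y * Kern ε W y z) := by
  have a0 := c.a0
  have e0 := c.e0
  have c0 := c.c0
  have hz0 : 0 < z := hδ.trans hz
  rw [← ENNReal.ofReal_mul (by positivity)]
  apply ENNReal.ofReal_le_ofReal
  have h := c.low y z hy hz0
  have h1 : 0 ≤ (y / z) ^ α := by positivity
  have h2 : δ ^ α ≤ z ^ α := Real.rpow_le_rpow hδ.le hz.le a0.le
  have h3 : (z / y) ^ α = z ^ α / y ^ α := Real.div_rpow hz0.le hy.le _
  have h4 : y * (δ ^ α / y ^ α) = δ ^ α * y ^ (1 - α) := by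
    have hy' : y ^ (1 - α) * y ^ α = y := by
      rw [← Real.rpow_add hy]; simp
    have : 0 < y ^ α := by positivity
    nth_rewrite 1 [← hy']
    field_simp
  unfold Kern
  calc ε * cs * δ ^ α * y ^ (1 - α) = y * (ε * (cs * (δ ^ α / y ^ α))) := by
        linear_combination (- ε * cs) * h4
    _ ≤ y * (ε * (cs * ((y / z) ^ α + (z / y) ^ α))) := by
        rw [h3]
        have : δ ^ α / y ^ α ≤ z ^ α / y ^ α := by gcongr
        gcongr; linarith
    _ ≤ y * (ε * W y z) := by gcongr
    _ ≤ y * (2 + ε * W y z) := by gcongr; linarith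

theorem Core.fin1 {α ε cs : ℝ} {W : ℝ → ℝ → ℝ} {φ : ℝ → ℝ} (c : Core α ε cs W φ) :
    MM φ (1 - α) ≠ ⊤ := by
  intro htop
  have a0 := c.a0
  have e0 := c.e0
  have c0 := c.c0
  obtain ⟨δ, hδ, hν⟩ := exists_delta c
  have hQ : ∀ x, 0 < x → ∫⁻ y in Iio x, ENNReal.ofReal (y ^ (1 - α)) ∂(nuM φ) = ⊤ := by
    intro x hx
    have := MM_le c (by linarith : 1 - α ≤ 1) hx
    rw [htop, top_le_iff, ENNReal.add_eq_top] at this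
    exact this.resolve_right ENNReal.ofReal_ne_top
  have hJ : ∀ x, 0 < x → x < δ → JJ (Kern ε W) φ x = ⊤ := by
    intro x hx hxδ
    have h := low_int φ (fun y z => if y < x ∧ x < y + z then
      ENNReal.ofReal (y * Kern ε W y z) else 0) x δ
      (h := fun y => ENNReal.ofReal (ε * cs * δ ^ α) * ENNReal.ofReal (y ^ (1 - α))) (by fun_prop)
      (by
        intro y z hy hyx hz
        rw [if_pos ⟨hyx, by linarith⟩]
        exact ker_low c hδ hy hz)
    rw [lintegral_const_mul _ (by fun_prop), hQ x hx, ENNReal.mul_top, ENNReal.mul_top hν] at h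
    · exact top_le_iff.1 h
    · simp only [ne_eq, ENNReal.ofReal_eq_zero, not_le]; positivity
  have hz : nuM φ (Iio δ) = 0 := by
    unfold nuM
    rw [withDensity_apply _ measurableSet_Iio]
    apply lintegral_eq_zero_of_ae_eq_zero
    filter_upwards [ae_restrict_mem measurableSet_Iio, ae_restrict_of_ae c.eqn,
      ae_restrict_of_ae (ae_restrict_mem (measurableSet_Ioi (a := (0:ℝ))))] with x h1 h2 h3
    have h3' : 0 < x := h3
    rw [hJ x h3 h1] at h2
    simp only [ENNReal.toReal_top, mul_eq_zero] at h2
    rcases h2 with h2 | h2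
    · exact absurd h2 (by positivity)
    · simp [h2]
  have := hQ δ hδ
  rw [setLIntegral_measure_zero _ _ hz] at this
  exact ENNReal.zero_ne_top this

theorem Core.finJ {α ε cs : ℝ} {W : ℝ → ℝ → ℝ} {φ : ℝ → ℝ} (c : Core α ε cs W φ) :
    ∀ᵐ x ∂(volume.restrict (Ioi (0:ℝ))), JJ (Kern ε W) φ x ≠ ⊤ := by
  have h : ∀ n : ℕ, ∀ᵐ x : ℝ, (1 / ((n : ℝ) + 1)) < x → JJ (Kern ε W) φ x ≠ ⊤ := by
    intro n
    have hR : (0:ℝ) < 1 / ((n : ℝ) + 1) := by positivity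
    have hu := c.upper hR
    have hlt : ∫⁻ x, gR (1 / ((n : ℝ) + 1)) x * JJ (Kern ε W) φ x ≠ ⊤ := by
      refine ne_top_of_le_ne_top ?_ hu
      have := c.fin1
      have : ENNReal.ofReal (ε * (1 / ((n : ℝ) + 1)) ^ (α - 1) / (1 - α)) * MM φ (1 - α) ≠ ⊤ :=
        ENNReal.mul_ne_top ENNReal.ofReal_ne_top this
      exact ENNReal.add_ne_top.2 ⟨ENNReal.ofReal_ne_top, ENNReal.add_ne_top.2 ⟨this, this⟩⟩
    have := ae_lt_top ((meas_gR _).mul (meas_JJ c.mK φ)) hlt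
    filter_upwards [this] with x hx hnx htop
    have hx0 : 0 < x := hR.trans hnx
    simp only [Pi.mul_apply, htop, gR] at hx
    rw [indicator_of_mem (show x ∈ Ioi _ from hnx), ENNReal.mul_top] at hx
    · exact lt_irrefl _ hx
    · simp [hx0]
  have h' := ae_all_iff.2 h
  filter_upwards [ae_restrict_of_ae h', ae_restrict_mem measurableSet_Ioi] with x hx hx0
  obtain ⟨n, hn⟩ := exists_nat_one_div_lt (show 0 < x from hx0)
  exact hx n hn

theorem rpow_sq_lint {φ : ℝ → ℝ} (q : ℝ) :
    ∫⁻ x, ENNReal.ofReal (x ^ (-q)) * ENNReal.ofReal (x ^ 2) ∂(nuM φ) = MM φ (2 - q) := by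
  unfold MM
  apply lintegral_congr_ae
  filter_upwards [ae_pos_nu φ] with x hx
  rw [← ENNReal.ofReal_mul (by positivity)]
  congr 1
  rw [← Real.rpow_natCast, ← Real.rpow_add hx]
  congr 1; push_cast; ring

theorem Core.gain {α ε cs : ℝ} {W : ℝ → ℝ → ℝ} {φ : ℝ → ℝ} (c : Core α ε cs W φ) {s : ℝ}
    (hs : 0 ≤ s) (h : MM φ (1 - s) ≠ ⊤) : MM φ (1 - s - α) ≠ ⊤ := by
  have a0 := c.a0
  have e0 := c.e0
  have c0 := c.c0
  obtain ⟨δ, hδ, hν⟩ := exists_delta c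
  have hw := c.weak c.finJ (g := fun x => ENNReal.ofReal (x ^ (-(1 + s)))) (by fun_prop)
  rw [rpow_sq_lint, show 2 - (1 + s) = 1 - s by ring] at hw
  have hl := low_int φ (fun y z => ENNReal.ofReal (y * Kern ε W y z) *
      ∫⁻ x in Ioo y (y + z), ENNReal.ofReal (x ^ (-(1 + s)))) δ δ
      (h := fun y => ENNReal.ofReal (ε * cs * δ ^ α * 2 ^ (-(1 + s))) *
        ENNReal.ofReal (y ^ (1 - s - α))) (by fun_prop)
      (by
        intro y z hy hyx hz
        refine le_trans ?_ (mul_le_mul' (ker_low c hδ hy hz)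
          (ell_low hy (hyx.trans hz).le (by linarith)))
        rw [← ENNReal.ofReal_mul (by positivity), ← ENNReal.ofReal_mul (by positivity),
          ← ENNReal.ofReal_mul (by positivity)]
        apply le_of_eq; congr 1
        rw [Real.mul_rpow (by norm_num) hy.le]
        have : y ^ (1 - s - α) = y ^ (1 - α) * (y * y ^ (-(1 + s))) := by
          rw [mul_comm y, ← Real.rpow_add_one hy.ne', ← Real.rpow_add hy]; congr 1; ring
        rw [this]; ring)
  rw [← hw, lintegral_const_mul _ (by fun_prop)] at hl
  have h1 := ne_top_of_le_ne_top h hl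
  have h2 : ∫⁻ y in Iio δ, ENNReal.ofReal (y ^ (1 - s - α)) ∂(nuM φ) ≠ ⊤ := by
    intro ht
    rw [ht, ENNReal.mul_top, ENNReal.mul_top hν] at h1
    · exact h1 rfl
    · simp only [ne_eq, ENNReal.ofReal_eq_zero, not_le]; positivity
  refine ne_top_of_le_ne_top ?_ (MM_le c (by linarith : 1 - s - α ≤ 1) hδ)
  simp [h2]

theorem MM_interp {φ : ℝ → ℝ} {p q r : ℝ} (h1 : p ≤ q) (h2 : q ≤ r) :
    MM φ q ≤ MM φ p + MM φ r := by
  unfold MM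
  rw [← lintegral_add_left (by fun_prop)]
  apply lintegral_mono_ae
  filter_upwards [ae_pos_nu φ] with x hx
  rcases le_total x 1 with h | h
  · refine le_trans ?_ le_self_add
    exact ENNReal.ofReal_le_ofReal (Real.rpow_le_rpow_of_exponent_ge hx h h1)
  · refine le_trans ?_ le_add_self
    exact ENNReal.ofReal_le_ofReal (Real.rpow_le_rpow_of_exponent_le h h2)

theorem Core.finneg {α ε cs : ℝ} {W : ℝ → ℝ → ℝ} {φ : ℝ → ℝ} (c : Core α ε cs W φ)
    (h : 1 / 2 ≤ α) : MM φ (-α) ≠ ⊤ := by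
  have h1 := c.gain (by linarith) c.fin1
  have h2 := c.gain (s := 2 * α) (by linarith) (by convert h1 using 2; ring)
  refine ne_top_of_le_ne_top ?_ (MM_interp (p := 1 - 2 * α - α) (r := 1) (by linarith) (by linarith))
  simp [h2, MM_one c]

theorem Core.fin0 {α ε cs : ℝ} {W : ℝ → ℝ → ℝ} {φ : ℝ → ℝ} (c : Core α ε cs W φ)
    (h : 1 / 2 ≤ α) : MM φ 0 ≠ ⊤ := by
  refine ne_top_of_le_ne_top ?_ (MM_interp (p := -α) (r := 1) (by linarith) (by linarith))
  simp [c.finneg h, MM_one c]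

theorem Core.bd0 {α ε cs : ℝ} {W : ℝ → ℝ → ℝ} {φ : ℝ → ℝ} (c : Core α ε cs W φ)
    (h : 1 / 2 ≤ α) : MM φ 0 ≤ 4 := by
  have hf := c.fin0 h
  have hw := c.weak c.finJ (g := fun x => ENNReal.ofReal (x ^ (-(2:ℝ)))) (by fun_prop)
  rw [rpow_sq_lint, sub_self] at hw
  set B := ∫⁻ y, ∫⁻ z, (if y ≤ z then (1:ENNReal) else 0) ∂(nuM φ) ∂(nuM φ) with hB
  have mB : Measurable (fun q : ℝ × ℝ => if q.1 ≤ q.2 then (1:ENNReal) else 0) :=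
    Measurable.ite (measurableSet_le measurable_fst measurable_snd) measurable_const measurable_const
  have mB1 : Measurable (fun y : ℝ => ∫⁻ z, (if y ≤ z then (1:ENNReal) else 0) ∂(nuM φ)) :=
    mB.lintegral_prod_right'
  have hB' : B = ∫⁻ y, ∫⁻ z, (if z ≤ y then (1:ENNReal) else 0) ∂(nuM φ) ∂(nuM φ) := by
    rw [hB, lintegral_lintegral_swap mB.aemeasurable]
  have mBy : ∀ y : ℝ, Measurable (fun z : ℝ => if y ≤ z then (1:ENNReal) else 0) := fun y =>
    mB.comp (by fun_prop : Measurable (fun z : ℝ => (y, z)))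
  have e0 : MM φ 0 = nuM φ univ := by unfold MM; simp
  have h2B : MM φ 0 * MM φ 0 ≤ B + B := by
    nth_rewrite 2 [hB']
    rw [hB, ← lintegral_add_left mB1]
    have : MM φ 0 * MM φ 0 = ∫⁻ y, ∫⁻ z, (1:ENNReal) ∂(nuM φ) ∂(nuM φ) := by
      simp [e0]
    rw [this]
    apply lintegral_mono; intro y
    dsimp only
    rw [← lintegral_add_left (mBy y)]
    apply lintegral_mono; intro z
    dsimp only
    rcases le_total y z with h | h <;> simp [h]
  have hlow : ENNReal.ofReal (1 / 2) * B ≤ MM φ 0 := by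
    rw [hw, hB, ← lintegral_const_mul _ mB1]
    apply lintegral_mono_ae
    filter_upwards [ae_pos_nu φ] with y hy
    rw [← lintegral_const_mul _ (mBy y)]
    apply lintegral_mono_ae
    filter_upwards [ae_pos_nu φ] with z hz
    split_ifs with hyz
    · refine le_trans ?_ (mul_le_mul' (ENNReal.ofReal_le_ofReal (?_ : 2 * y ≤ _))
        (ell_low hy hyz (by norm_num)))
      · rw [← ENNReal.ofReal_mul (by positivity), mul_one]
        apply ENNReal.ofReal_le_ofReal
        rw [Real.rpow_neg (by positivity)]
        norm_cast
        apply le_of_eq; field_simp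
      · have := c.W0 y z hy hz
        have := c.e0
        unfold Kern
        have : 0 ≤ y * (ε * W y z) := by positivity
        linarith
    · simp
  have hBt : B ≠ ⊤ := by
    intro ht
    rw [ht, ENNReal.mul_top (by simp)] at hlow
    exact hf (top_le_iff.1 hlow)
  rw [← ENNReal.ofReal_toReal hf, ← ENNReal.ofReal_toReal hBt] at h2B hlow
  rw [← ENNReal.ofReal_toReal hf]
  have n0 : 0 ≤ (MM φ 0).toReal := ENNReal.toReal_nonneg
  have b0 : 0 ≤ B.toReal := ENNReal.toReal_nonneg
  rw [← ENNReal.ofReal_mul n0, ← ENNReal.ofReal_add b0 b0,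
    ENNReal.ofReal_le_ofReal_iff (by positivity)] at h2B
  rw [← ENNReal.ofReal_mul (by norm_num), ENNReal.ofReal_le_ofReal_iff n0] at hlow
  rw [show (4:ENNReal) = ENNReal.ofReal 4 by simp]
  apply ENNReal.ofReal_le_ofReal
  by_contra! hcon
  nlinarith

theorem Core.bd1 {α ε cs : ℝ} {W : ℝ → ℝ → ℝ} {φ : ℝ → ℝ} (c : Core α ε cs W φ)
    (h : 1 / 2 ≤ α) : MM φ (1 - α) ≤ 5 := by
  have a0 := c.a0
  have a1 := c.a1
  calc MM φ (1 - α) ≤ MM φ 0 + MM φ 1 := MM_interp (by linarith) (by linarith)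
    _ ≤ 4 + 1 := by rw [MM_one c]; gcongr; exact c.bd0 h
    _ = 5 := by norm_num

theorem Core.tail {α ε cs : ℝ} {W : ℝ → ℝ → ℝ} {φ : ℝ → ℝ} (c : Core α ε cs W φ)
    (h : 1 / 2 ≤ α) (hε : ε ≤ 1) {R : ℝ} (hR : 0 < R) :
    ∫⁻ x in Ioi R, ENNReal.ofReal x ∂(nuM φ) ≤
      ENNReal.ofReal (2 / R + 10 * (R ^ (α - 1) / (1 - α))) := by
  have a0 := c.a0
  have a1 := c.a1
  have e0 := c.e0
  have b1 : 0 < 1 - α := by linarith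
  have hw := c.weak c.finJ (meas_gR R)
  have hu := c.upper hR
  rw [master c.mK φ (meas_gR R), ← hw] at hu
  have hl : ∫⁻ x in Ioi R, ENNReal.ofReal x ∂(nuM φ) =
      ∫⁻ x, gR R x * ENNReal.ofReal (x ^ 2) ∂(nuM φ) := by
    rw [← lintegral_indicator measurableSet_Ioi]
    congr 1; ext x
    unfold gR
    by_cases hx : R < x
    · have hx0 : 0 < x := hR.trans hx
      rw [indicator_of_mem (show x ∈ Ioi R from hx), indicator_of_mem (show x ∈ Ioi R from hx),
        ← ENNReal.ofReal_mul (by positivity)]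
      congr 1; field_simp
    · rw [indicator_of_notMem (show x ∉ Ioi R from hx),
        indicator_of_notMem (show x ∉ Ioi R from hx), zero_mul]
  rw [hl]
  refine hu.trans ?_
  have k : ENNReal.ofReal (ε * R ^ (α - 1) / (1 - α)) * MM φ (1 - α) ≤
      ENNReal.ofReal (5 * (R ^ (α - 1) / (1 - α))) := by
    calc _ ≤ ENNReal.ofReal (1 * R ^ (α - 1) / (1 - α)) * ENNReal.ofReal 5 := by
          gcongr
          simpa using c.bd1 h
      _ = _ := by
          rw [← ENNReal.ofReal_mul (by positivity)]; congr 1; ring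
  refine (add_le_add le_rfl (add_le_add k k)).trans ?_
  rw [← ENNReal.ofReal_add (by positivity) (by positivity),
    ← ENNReal.ofReal_add (by positivity) (by positivity)]
  apply le_of_eq; congr 1; ring

/-- the radius and the resulting lower bound on the moment of order alpha -/
theorem exists_R {α : ℝ} (a1 : α < 1) :
    ∃ R : ℝ, 0 < R ∧ 2 / R + 10 * (R ^ (α - 1) / (1 - α)) ≤ 1 / 2 := by
  have h1 : Tendsto (fun R : ℝ => 2 / R + 10 * (R ^ (α - 1) / (1 - α))) atTop
      (nhds (0 + 10 * (0 / (1 - α)))) := by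
    refine Tendsto.add (tendsto_const_nhds.div_atTop tendsto_id) ?_
    refine Tendsto.const_mul _ (Tendsto.div_const ?_ _)
    have := tendsto_rpow_neg_atTop (by linarith : 0 < 1 - α)
    simpa using this
  have h2 := h1.eventually (Iic_mem_nhds (show (0 + 10 * (0 / (1 - α))) < 1 / 2 by simp))
  obtain ⟨R, hR, hR0⟩ := (h2.and (eventually_gt_atTop 0)).exists
  exact ⟨R, hR0, hR⟩

theorem Core.bdα {α ε cs : ℝ} {W : ℝ → ℝ → ℝ} {φ : ℝ → ℝ} (c : Core α ε cs W φ)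
    (h : 1 / 2 ≤ α) (hε : ε ≤ 1) {R : ℝ} (hR : 0 < R)
    (hRR : 2 / R + 10 * (R ^ (α - 1) / (1 - α)) ≤ 1 / 2) :
    ENNReal.ofReal (R ^ (α - 1) / 2) ≤ MM φ α := by
  have a1 := c.a1
  have ht := (c.tail h hε hR).trans (ENNReal.ofReal_le_ofReal hRR)
  have hs : ∫⁻ x in Iic R, ENNReal.ofReal x ∂(nuM φ) ≤ ENNReal.ofReal (R ^ (1 - α)) * MM φ α := by
    unfold MM
    rw [← lintegral_const_mul _ (by fun_prop)]
    refine le_trans ?_ (setLIntegral_le_lintegral (Iic R) _)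
    apply lintegral_mono_ae
    filter_upwards [ae_restrict_mem measurableSet_Iic, ae_restrict_of_ae (ae_pos_nu φ)] with x hx hx0
    have hx' : x ≤ R := hx
    rw [← ENNReal.ofReal_mul (by positivity)]
    apply ENNReal.ofReal_le_ofReal
    have : x = x ^ (1 - α) * x ^ α := by rw [← Real.rpow_add hx0]; simp
    nth_rewrite 1 [this]
    gcongr
  have hm := c.mass
  rw [← lintegral_add_compl _ (measurableSet_Iic (a := R)), compl_Iic] at hm
  have h1 : 1 ≤ ENNReal.ofReal (R ^ (1 - α)) * MM φ α + ENNReal.ofReal (1 / 2) := by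
    rw [← hm]; exact add_le_add hs ht
  by_cases hMt : MM φ α = ⊤
  · simp [hMt]
  rw [← ENNReal.ofReal_toReal hMt] at h1 ⊢
  have m0 : 0 ≤ (MM φ α).toReal := ENNReal.toReal_nonneg
  rw [← ENNReal.ofReal_mul (by positivity), ← ENNReal.ofReal_add (by positivity) (by norm_num),
    ENNReal.one_le_ofReal] at h1
  apply ENNReal.ofReal_le_ofReal
  have e : R ^ (α - 1) * R ^ (1 - α) = 1 := by rw [← Real.rpow_add hR]; simp
  have : 0 < R ^ (α - 1) := by positivity
  nlinarith
theorem real_MM {α ε cs : ℝ} {W : ℝ → ℝ → ℝ} {φ : ℝ → ℝ} (c : Core α ε cs W φ) {p : ℝ}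
    (h : MM φ p ≠ ⊤) : IntegrableOn (fun z => z ^ p * φ z) (Ioi 0) ∧
      ∫ z in Ioi (0:ℝ), z ^ p * φ z = (MM φ p).toReal := by
  have mφ := c.mφ
  have e : MM φ p = ∫⁻ z in Ioi (0:ℝ), ENNReal.ofReal (z ^ p * φ z) := by
    unfold MM
    rw [lint_nu c.mφ (by fun_prop)]
    apply lintegral_congr_ae
    filter_upwards [ae_restrict_mem measurableSet_Ioi] with z hz
    have hz' : 0 < z := hz
    rw [ENNReal.ofReal_mul (by positivity), mul_comm]
  have hn : 0 ≤ᵐ[volume.restrict (Ioi (0:ℝ))] (fun z => z ^ p * φ z) := by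
    filter_upwards [ae_restrict_mem measurableSet_Ioi] with z hz
    have hz' : 0 < z := hz
    exact mul_nonneg (by positivity) (c.φ0 z)
  have hm : AEStronglyMeasurable (fun z => z ^ p * φ z) (volume.restrict (Ioi (0:ℝ))) := by
    apply Measurable.aestronglyMeasurable; fun_prop
  constructor
  · refine ⟨hm, ?_⟩
    rw [hasFiniteIntegral_iff_ofReal hn, ← e]
    exact lt_top_iff_ne_top.2 h
  · rw [integral_eq_lintegral_of_nonneg_ae hn hm, ← e]

theorem Core.finα {α ε cs : ℝ} {W : ℝ → ℝ → ℝ} {φ : ℝ → ℝ} (c : Core α ε cs W φ)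
    (h : 1 / 2 ≤ α) : MM φ α ≠ ⊤ := by
  have a1 := c.a1
  refine ne_top_of_le_ne_top ?_ (MM_interp (p := 0) (r := 1) (by linarith) (by linarith))
  simp [c.fin0 h, MM_one c]

theorem Core.final {α ε cs : ℝ} {W : ℝ → ℝ → ℝ} {φ : ℝ → ℝ} (c : Core α ε cs W φ)
    (h : 1 / 2 ≤ α) {m : ℝ} (hm0 : 0 < m) (hm : ENNReal.ofReal m ≤ MM φ α)
    {x τ : ℝ} (hx : 0 < x) (hx1 : x ≤ 1) (hτ : 0 < τ) :
    cs * m * exp (-2) / 4 * ε * x ^ (-1 - α) * min τ x ≤ Phi ε W φ x - Phi ε W φ (x + τ) := by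
  have a0 := c.a0
  have a1 := c.a1
  have e0 := c.e0
  have c0 := c.c0
  have mφ := c.mφ
  obtain ⟨iA, eA⟩ := real_MM c (c.finneg h)
  obtain ⟨iB, eB⟩ := real_MM c (c.finα h)
  set A := (MM φ (-α)).toReal
  set B := (MM φ α).toReal with hB
  have hmB : m ≤ B := by
    rw [hB]; exact (ENNReal.ofReal_le_iff_le_toReal (c.finα h)).1 hm
  have A0 : 0 ≤ A := ENNReal.toReal_nonneg
  have B0 : 0 ≤ B := ENNReal.toReal_nonneg
  have Wform : ∀ y z : ℝ, 0 < y → 0 < z → (y / z) ^ α + (z / y) ^ α =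
      y ^ α * z ^ (-α) + y ^ (-α) * z ^ α := by
    intro y z hy hz
    rw [Real.div_rpow hy.le hz.le, Real.div_rpow hz.le hy.le, Real.rpow_neg hy.le,
      Real.rpow_neg hz.le]
    ring
  have iS : ∀ y : ℝ, IntegrableOn (fun z => y ^ α * (z ^ (-α) * φ z) + y ^ (-α) * (z ^ α * φ z))
      (Ioi 0) := fun y => (iA.const_mul _).add (iB.const_mul _)
  have vS : ∀ y : ℝ, ∫ z in Ioi (0:ℝ), (y ^ α * (z ^ (-α) * φ z) + y ^ (-α) * (z ^ α * φ z)) =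
      y ^ α * A + y ^ (-α) * B := by
    intro y
    rw [integral_add (iA.const_mul _) (iB.const_mul _), integral_const_mul, integral_const_mul,
      eA, eB]
  have mWy : ∀ y, Measurable (fun z => W y z) := fun y =>
    c.mW.comp (by fun_prop : Measurable (fun z : ℝ => (y, z)))
  have iW : ∀ y : ℝ, 0 < y → IntegrableOn (fun z => W y z * φ z) (Ioi 0) := by
    intro y hy
    refine (iS y).mono' ((mWy y).mul mφ).aestronglyMeasurable ?_
    filter_upwards [ae_restrict_mem measurableSet_Ioi] with z hz
    have hz' : 0 < z := hz
    have h1 := c.W0 y z hy hz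
    have h2 := c.up y z hy hz
    rw [Wform y z hy hz] at h2
    have h3 := c.φ0 z
    rw [Real.norm_of_nonneg (mul_nonneg h1 h3)]
    have := mul_le_mul_of_nonneg_right h2 h3
    linarith
  have bup : ∀ y : ℝ, 0 < y → betaW W φ y ≤ y ^ α * A + y ^ (-α) * B := by
    intro y hy
    rw [← vS y]
    unfold betaW
    refine setIntegral_mono_on (iW y hy) (iS y) measurableSet_Ioi fun z hz => ?_
    have h2 := c.up y z hy hz
    rw [Wform y z hy hz] at h2
    have := mul_le_mul_of_nonneg_right h2 (c.φ0 z)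
    linarith
  have blow : ∀ y : ℝ, 0 < y → cs * y ^ (-α) * B ≤ betaW W φ y := by
    intro y hy
    unfold betaW
    rw [← eB, ← integral_const_mul]
    refine setIntegral_mono_on (iB.const_mul _) (iW y hy) measurableSet_Ioi fun z hz => ?_
    have hz' : 0 < z := hz
    have h2 := c.low y z hy hz
    rw [Wform y z hy hz] at h2
    have := mul_le_mul_of_nonneg_right h2 (c.φ0 z)
    have h4 : 0 ≤ cs * (y ^ α * z ^ (-α)) * φ z := mul_nonneg (by positivity) (c.φ0 z)
    linarith
  have bnn : ∀ y : ℝ, 0 < y → 0 ≤ betaW W φ y := fun y hy =>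
    le_trans (by positivity) (blow y hy)
  have mb : Measurable (betaW W φ) := by
    unfold betaW
    have : StronglyMeasurable (fun p : ℝ × ℝ => W p.1 p.2 * φ p.2) :=
      (c.mW.mul (mφ.comp measurable_snd)).stronglyMeasurable
    exact (this.integral_prod_right' (ν := volume.restrict (Ioi (0:ℝ)))).measurable
  set F : ℝ → ℝ := fun y => betaW W φ y / y * exp (-y) with hF
  have mF : Measurable F := by rw [hF]; fun_prop
  have iF : IntegrableOn F (Ioi x) := by
    have ie : IntegrableOn (fun y : ℝ => (x ^ (α - 1) * A + x ^ (-α - 1) * B) * exp (-y)) (Ioi x) :=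
      (integrableOn_exp_neg_Ioi x).const_mul _
    refine ie.mono' mF.aestronglyMeasurable ?_
    filter_upwards [ae_restrict_mem measurableSet_Ioi] with y hy
    have hy' : x < y := hy
    have hy0 : 0 < y := hx.trans hy'
    have h1 := bup y hy0
    have h2 := bnn y hy0
    rw [Real.norm_of_nonneg (by positivity)]
    rw [hF]
    have h3 : (y ^ α * A + y ^ (-α) * B) / y = y ^ (α - 1) * A + y ^ (-α - 1) * B := by
      rw [Real.rpow_sub_one hy0.ne', Real.rpow_sub_one hy0.ne']; ring
    have h4 := Real.rpow_le_rpow_of_nonpos hx hy'.le (by linarith : α - 1 ≤ 0)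
    have h5 := Real.rpow_le_rpow_of_nonpos hx hy'.le (by linarith : -α - 1 ≤ 0)
    dsimp only
    gcongr
    calc betaW W φ y / y ≤ (y ^ α * A + y ^ (-α) * B) / y := by gcongr
      _ = _ := h3
      _ ≤ _ := by gcongr
  have F0 : ∀ y, 0 < y → 0 ≤ F y := fun y hy => by
    have := bnn y hy
    rw [hF]; positivity
  have split : Phi ε W φ x - Phi ε W φ (x + τ) = ε * ∫ y in Ioc x (x + τ), F y := by
    unfold Phi
    have hu : Ioi x = Ioc x (x + τ) ∪ Ioi (x + τ) :=
      (Ioc_union_Ioi_eq_Ioi (by linarith)).symm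
    have : ∫ y in Ioi x, F y = (∫ y in Ioc x (x + τ), F y) + ∫ y in Ioi (x + τ), F y := by
      rw [hu]
      refine setIntegral_union ?_ measurableSet_Ioi (iF.mono_set Ioc_subset_Ioi_self)
        (iF.mono_set (Ioi_subset_Ioi (by linarith)))
      exact Set.disjoint_left.2 fun y h1 h2 => absurd h1.2 (not_le.2 h2)
    change ε * (∫ y in Ioi x, F y) - ε * (∫ y in Ioi (x + τ), F y) = _
    rw [this]; ring
  rw [split]
  set t := min τ x with ht
  have t0 : 0 < t := lt_min hτ hx
  have htτ : t ≤ τ := min_le_left _ _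
  have htx : t ≤ x := min_le_right _ _
  have s1 : ∫ y in Ioc x (x + t), F y ≤ ∫ y in Ioc x (x + τ), F y := by
    apply setIntegral_mono_set (iF.mono_set Ioc_subset_Ioi_self)
    · filter_upwards [ae_restrict_mem measurableSet_Ioc] with y hy
      exact F0 y (hx.trans hy.1)
    · exact (Ioc_subset_Ioc_right (by linarith)).eventuallyLE
  have s2 : ∫ y in Ioc x (x + t), (cs * m * exp (-2) / 4 * x ^ (-1 - α)) ≤
      ∫ y in Ioc x (x + t), F y := by
    refine setIntegral_mono_on (integrable_const _) (iF.mono_set Ioc_subset_Ioi_self) measurableSet_Ioc ?_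
    intro y hy
    have hy0 : 0 < y := hx.trans hy.1
    have hy2 : y ≤ 2 * x := by linarith [hy.2]
    have h1 := blow y hy0
    have h2 : exp (-2) ≤ exp (-y) := Real.exp_le_exp.2 (by linarith)
    have h3 : x ^ (-1 - α) / 4 ≤ y ^ (-1 - α) := by
      have k1 := Real.rpow_le_rpow_of_nonpos hy0 hy2 (by linarith : -1 - α ≤ 0)
      rw [Real.mul_rpow (by norm_num) hx.le] at k1
      have k2 : (2:ℝ) ^ (-2 : ℝ) ≤ 2 ^ (-1 - α) :=
        Real.rpow_le_rpow_of_exponent_le (by norm_num) (by linarith)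
      have k3 : (2:ℝ) ^ (-2 : ℝ) = 1 / 4 := by
        rw [Real.rpow_neg (by norm_num)]; norm_num
      rw [k3] at k2
      have : 0 < x ^ (-1 - α) := by positivity
      nlinarith
    have h4 : y ^ (-α) / y = y ^ (-1 - α) := by
      rw [← Real.rpow_sub_one hy0.ne']; congr 1; ring
    calc cs * m * exp (-2) / 4 * x ^ (-1 - α) = cs * m * (x ^ (-1 - α) / 4) * exp (-2) := by ring
      _ ≤ cs * B * y ^ (-1 - α) * exp (-y) := by gcongr
      _ = cs * y ^ (-α) * B / y * exp (-y) := by rw [← h4]; ring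
      _ ≤ betaW W φ y / y * exp (-y) := by gcongr
  rw [setIntegral_const] at s2
  have hv : volume.real (Ioc x (x + t)) = t := by
    rw [Real.volume_real_Ioc]; simp [t0.le]
  rw [hv, smul_eq_mul] at s2
  calc _ = ε * (t * (cs * m * exp (-2) / 4 * x ^ (-1 - α))) := by ring
    _ ≤ _ := by gcongr; exact s2.trans s1
noncomputable def Wq (W : ℝ → ℝ → ℝ) (x y : ℝ) : ℝ :=
  (Ioi (0:ℝ) ×ˢ Ioi (0:ℝ)).indicator (fun p : ℝ × ℝ => W p.1 p.2) (x, y)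

theorem Wq_eq (W : ℝ → ℝ → ℝ) {x y : ℝ} (hx : 0 < x) (hy : 0 < y) : Wq W x y = W x y := by
  unfold Wq
  rw [indicator_of_mem (show (x, y) ∈ Ioi (0:ℝ) ×ˢ Ioi (0:ℝ) from ⟨hx, hy⟩)]

theorem meas_Wq {W : ℝ → ℝ → ℝ}
    (h : ContinuousOn (fun p : ℝ × ℝ => W p.1 p.2) (Ioi 0 ×ˢ Ioi 0)) :
    Measurable (Function.uncurry (Wq W)) := by
  classical
  have h2 := ContinuousOn.measurable_piecewise (g := fun _ : ℝ × ℝ => (0:ℝ)) h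
    continuousOn_const (measurableSet_Ioi.prod measurableSet_Ioi)
  convert h2 using 1
  ext p
  change (Ioi (0:ℝ) ×ˢ Ioi (0:ℝ)).indicator (fun p : ℝ × ℝ => W p.1 p.2) p = _
  by_cases hp : p ∈ Ioi (0:ℝ) ×ˢ Ioi (0:ℝ)
  · rw [indicator_of_mem hp, Set.piecewise_eq_of_mem _ _ _ hp]
  · rw [indicator_of_notMem hp, Set.piecewise_eq_of_notMem _ _ _ hp]

theorem rpow_le_one_add' {t α : ℝ} (ht : 0 ≤ t) (h0 : 0 < α) (h1 : α < 1) : t ^ α ≤ 1 + t := by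
  rcases le_total t 1 with h | h
  · have := Real.rpow_le_one ht h h0.le; linarith
  · have := Real.rpow_le_rpow_of_exponent_le h h1.le
    rw [Real.rpow_one] at this; linarith

theorem ker_lin {α ε : ℝ} {W : ℝ → ℝ → ℝ} (h0 : 0 < α) (h1 : α < 1) (e0 : 0 < ε)
    (up : ∀ x y : ℝ, 0 < x → 0 < y → W x y ≤ (x / y) ^ α + (y / x) ^ α)
    {d y z : ℝ} (hd : 0 < d) (hy : 0 < y) (hz : d < z) :
    y * Kern ε W y z ≤ y * (2 / d + ε * ((1 + y / d) / d + (1 / d + 1 / y))) * z := by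
  have hz0 : 0 < z := hd.trans hz
  have k1 : (y / z) ^ α ≤ 1 + y / d := by
    refine (rpow_le_one_add' (by positivity) h0 h1).trans ?_
    gcongr
  have k2 : (z / y) ^ α ≤ 1 + z / y := rpow_le_one_add' (by positivity) h0 h1
  have k3 : 1 ≤ z / d := by rw [le_div_iff₀ hd]; linarith
  have k4 := up y z hy hz0
  have k5 : 0 ≤ 1 + y / d := by positivity
  unfold Kern
  calc y * (2 + ε * W y z) ≤ y * (2 * (z / d) + ε * ((1 + y / d) * (z / d) + (z / d + z / y))) := by
        gcongr
        · linarith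
        · nlinarith
    _ = _ := by ring

theorem JJ_real {α ε : ℝ} {W : ℝ → ℝ → ℝ} {φ : ℝ → ℝ} (h0 : 0 < α) (h1 : α < 1) (e0 : 0 < ε)
    (mK : Measurable (Function.uncurry (Kern ε W))) (mφ : Measurable φ) (φ0 : ∀ x, 0 ≤ φ x)
    (W0 : ∀ x y : ℝ, 0 < x → 0 < y → 0 ≤ W x y)
    (up : ∀ x y : ℝ, 0 < x → 0 < y → W x y ≤ (x / y) ^ α + (y / x) ^ α)
    (mass : ∫⁻ x, ENNReal.ofReal x ∂(nuM φ) = 1) (x : ℝ) :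
    ∫ y in Ioo 0 x, ∫ z in Ioi (x - y), y * Kern ε W y z * φ y * φ z =
      (JJ (Kern ε W) φ x).toReal := by
  set kk : ℝ → ℝ → ENNReal := fun y z =>
    if y < x ∧ x < y + z then ENNReal.ofReal (y * Kern ε W y z) else 0 with hkk
  have mk2 : Measurable (fun q : ℝ × ℝ => kk q.1 q.2) :=
    (meas_kk mK).comp (by fun_prop : Measurable (fun q : ℝ × ℝ => (x, q.1, q.2)))
  have mk1 : ∀ y, Measurable (kk y) := fun y =>
    mk2.comp (by fun_prop : Measurable (fun z : ℝ => (y, z)))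
  have mI : Measurable (fun y => ∫⁻ z, kk y z ∂(nuM φ)) := mk2.lintegral_prod_right'
  set L : ℝ → ENNReal := fun y => ENNReal.ofReal (φ y) * ∫⁻ z, kk y z ∂(nuM φ) with hL
  have mL : Measurable L := mφ.ennreal_ofReal.mul mI
  have eJ : JJ (Kern ε W) φ x = ∫⁻ y in Ioo 0 x, L y := by
    have : JJ (Kern ε W) φ x = ∫⁻ y, (∫⁻ z, kk y z ∂(nuM φ)) ∂(nuM φ) := rfl
    rw [this, lint_nu mφ mI, ← lintegral_indicator measurableSet_Ioi,
      ← lintegral_indicator measurableSet_Ioo]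
    congr 1; ext y
    by_cases hy : 0 < y
    · rw [indicator_of_mem (show y ∈ Ioi (0:ℝ) from hy)]
      by_cases hyx : y < x
      · rw [indicator_of_mem (show y ∈ Ioo 0 x from ⟨hy, hyx⟩)]
      · rw [indicator_of_notMem (fun h => hyx h.2)]
        have : ∀ z, kk y z = 0 := fun z => if_neg fun h => hyx h.1
        simp [this]
    · rw [indicator_of_notMem (show y ∉ Ioi (0:ℝ) from hy), indicator_of_notMem (fun h => hy h.1)]
  rw [eJ, ← integral_toReal mL.aemeasurable]
  · apply setIntegral_congr_fun measurableSet_Ioo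
    intro y hy
    have hy0 : 0 < y := hy.1
    have hyx : y < x := hy.2
    have hd : 0 < x - y := by linarith
    dsimp only
    rw [integral_eq_lintegral_of_nonneg_ae]
    · congr 1
      rw [hL]
      dsimp only
      have mm : Measurable (fun z => ENNReal.ofReal (φ z) * kk y z) := mφ.ennreal_ofReal.mul (mk1 y)
      rw [lint_nu mφ (mk1 y), ← lintegral_const_mul _ mm,
        ← lintegral_indicator measurableSet_Ioi, ← lintegral_indicator measurableSet_Ioi]
      congr 1; ext z
      by_cases hz : x - y < z
      · have hz0 : 0 < z := hd.trans hz
        have hw := W0 y z hy0 hz0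
        rw [indicator_of_mem (show z ∈ Ioi (x - y) from hz),
          indicator_of_mem (show z ∈ Ioi (0:ℝ) from hz0), hkk]
        dsimp only
        rw [if_pos ⟨hyx, by linarith⟩]
        have hK : 0 ≤ Kern ε W y z := by unfold Kern; positivity
        have := φ0 y
        rw [ENNReal.ofReal_mul (by positivity), ENNReal.ofReal_mul (by positivity)]
        ring
      · rw [indicator_of_notMem (show z ∉ Ioi (x - y) from hz)]
        have : kk y z = 0 := if_neg fun h => hz (by linarith [h.2])
        unfold indicator
        simp [this]
    · filter_upwards [ae_restrict_mem measurableSet_Ioi] with z hz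
      have hz' : x - y < z := hz
      have hz0 : 0 < z := hd.trans hz'
      have hw := W0 y z hy0 hz0
      have hK : 0 ≤ Kern ε W y z := by unfold Kern; positivity
      have := φ0 y
      have := φ0 z
      change 0 ≤ _
      positivity
    · have : Measurable (fun z => Kern ε W y z) :=
        mK.comp (by fun_prop : Measurable (fun z : ℝ => (y, z)))
      apply Measurable.aestronglyMeasurable
      fun_prop
  · filter_upwards [ae_restrict_mem measurableSet_Ioo] with y hy
    have hy0 : 0 < y := hy.1
    have hd : 0 < x - y := by linarith [hy.2]
    apply ENNReal.mul_lt_top ENNReal.ofReal_lt_top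
    set C := y * (2 / (x - y) + ε * ((1 + y / (x - y)) / (x - y) + (1 / (x - y) + 1 / y))) with hC
    have hC0 : 0 ≤ C := by positivity
    calc ∫⁻ z, kk y z ∂(nuM φ) ≤ ∫⁻ z, ENNReal.ofReal C * ENNReal.ofReal z ∂(nuM φ) := by
          apply lintegral_mono
          intro z
          rw [hkk]
          dsimp only
          split_ifs with h
          · rw [← ENNReal.ofReal_mul hC0]
            exact ENNReal.ofReal_le_ofReal (ker_lin h0 h1 e0 up hd hy0 (by linarith [h.2]))
          · exact zero_le
      _ = ENNReal.ofReal C := by rw [lintegral_const_mul _ (by fun_prop), mass, mul_one]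
      _ < ⊤ := ENNReal.ofReal_lt_top

theorem exists_core {α ε cs : ℝ} {W : ℝ → ℝ → ℝ} {φ : ℝ → ℝ} (h0 : 0 < α) (h1 : α < 1)
    (e0 : 0 < ε) (c0 : 0 < cs) (hW : GoodW α W)
    (hlow : ∀ x y : ℝ, 0 < x → 0 < y → cs * ((x / y) ^ α + (y / x) ^ α) ≤ W x y)
    (hφ : IsProfile (Kern ε W) φ) (hn : IsNormalised φ) :
    ∃ ψ : ℝ → ℝ, Core α ε cs (Wq W) ψ ∧ ∀ x, 0 < x → Phi ε W φ x = Phi ε (Wq W) ψ x := by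
  obtain ⟨hli, hpos, hint, heq⟩ := hφ
  obtain ⟨hcont, -, -, hbd⟩ := hW
  have hae : AEMeasurable φ (volume.restrict (Ioi (0:ℝ))) := hli.aestronglyMeasurable.aemeasurable
  set ψ : ℝ → ℝ := fun x => max (hae.mk φ x) 0 with hψ
  have mψ : Measurable ψ := hae.measurable_mk.max measurable_const
  have eψ : ∀ᵐ x ∂(volume.restrict (Ioi (0:ℝ))), φ x = ψ x := by
    filter_upwards [hae.ae_eq_mk, hpos] with x hx hp
    rw [hψ]; dsimp only; rw [← hx, max_eq_left hp]
  have ψ0 : ∀ x, 0 ≤ ψ x := fun x => le_max_right _ _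
  have W0 : ∀ x y : ℝ, 0 < x → 0 < y → 0 ≤ Wq W x y := fun x y hx hy => by
    rw [Wq_eq W hx hy]; exact (hbd x y hx hy).1
  have up : ∀ x y : ℝ, 0 < x → 0 < y → Wq W x y ≤ (x / y) ^ α + (y / x) ^ α := fun x y hx hy => by
    rw [Wq_eq W hx hy]; exact (hbd x y hx hy).2
  have mW := meas_Wq hcont
  have mK : Measurable (Function.uncurry (Kern ε (Wq W))) := by
    have h : Function.uncurry (Kern ε (Wq W)) = fun p => 2 + ε * Function.uncurry (Wq W) p := by
      ext p; rfl
    rw [h]; fun_prop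
  have mass : ∫⁻ x, ENNReal.ofReal x ∂(nuM ψ) = 1 := by
    rw [lint_nu mψ (by fun_prop)]
    have hnn : 0 ≤ᵐ[volume.restrict (Ioi (0:ℝ))] (fun x => x * φ x) := by
      filter_upwards [ae_restrict_mem measurableSet_Ioi, hpos] with x hx hp
      exact mul_nonneg (le_of_lt hx) hp
    have := ofReal_integral_eq_lintegral_ofReal hint hnn
    rw [show ∫ x in Ioi (0:ℝ), x * φ x = 1 from hn, ENNReal.ofReal_one] at this
    rw [this]
    apply lintegral_congr_ae
    filter_upwards [ae_restrict_mem measurableSet_Ioi, eψ] with x hx hp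
    rw [hp, ENNReal.ofReal_mul (le_of_lt hx), mul_comm]
  have eψ' : ∀ d : ℝ, 0 ≤ d → ∀ᵐ x ∂(volume.restrict (Ioi d)), φ x = ψ x := fun d hd =>
    ae_restrict_of_ae_restrict_of_subset (Ioi_subset_Ioi hd) eψ
  have eqn : ∀ᵐ x ∂(volume.restrict (Ioi (0:ℝ))),
      x ^ 2 * ψ x = (JJ (Kern ε (Wq W)) ψ x).toReal := by
    filter_upwards [heq, eψ] with x hx hx2
    rw [← JJ_real h0 h1 e0 mK mψ ψ0 W0 up mass x, ← hx2, hx]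
    apply integral_congr_ae
    filter_upwards [ae_restrict_mem measurableSet_Ioo,
      ae_restrict_of_ae_restrict_of_subset Ioo_subset_Ioi_self eψ] with y hy hy2
    apply integral_congr_ae
    have hd : 0 ≤ x - y := by linarith [hy.2]
    filter_upwards [ae_restrict_mem measurableSet_Ioi, eψ' _ hd] with z hz hz2
    have hz0 : 0 < z := lt_of_le_of_lt hd hz
    unfold Kern
    rw [hy2, hz2, Wq_eq W hy.1 hz0]
  refine ⟨ψ, ⟨h0, h1, e0, c0, mW, mψ, ψ0, W0, up, ?_, mass, eqn⟩, ?_⟩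
  · intro x y hx hy
    rw [Wq_eq W hx hy]; exact hlow x y hx hy
  · intro x hx
    unfold Phi
    congr 1
    apply setIntegral_congr_fun measurableSet_Ioi
    intro y hy
    have hy0 : 0 < y := lt_trans hx hy
    have : betaW W φ y = betaW (Wq W) ψ y := by
      unfold betaW
      apply integral_congr_ae
      filter_upwards [ae_restrict_mem measurableSet_Ioi, eψ] with z hz hz2
      rw [hz2, Wq_eq W hy0 hz]
    simp only [this]

theorem stmt17 (α : ℝ) (hα : α ∈ Ico (1/2 : ℝ) 1)
    (W : ℝ → ℝ → ℝ) (hW : GoodW α W)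
    (cstar : ℝ) (hcstar : 0 < cstar)
    (hlow : ∀ x y : ℝ, 0 < x → 0 < y → cstar * ((x / y) ^ α + (y / x) ^ α) ≤ W x y) :
    ∃ εstar > (0:ℝ), ∃ cα > (0:ℝ), ∀ ε : ℝ, 0 < ε → ε ≤ εstar →
      ∀ φ : ℝ → ℝ, IsProfile (Kern ε W) φ → IsNormalised φ →
        ∀ x : ℝ, 0 < x → x ≤ 1 → ∀ τ : ℝ, 0 < τ →
          (x ≤ τ → cα * ε * x ^ (-α) ≤ Phi ε W φ x - Phi ε W φ (x + τ)) ∧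
          (τ ≤ x → cα * ε * x ^ (-1 - α) * τ ≤ Phi ε W φ x - Phi ε W φ (x + τ)) := by
  obtain ⟨ha, a1⟩ := hα
  have a0 : 0 < α := by linarith
  obtain ⟨R, hR, hRR⟩ := exists_R a1
  have hm0 : 0 < R ^ (α - 1) / 2 := by positivity
  refine ⟨1, one_pos, cstar * (R ^ (α - 1) / 2) * exp (-2) / 4, by positivity, ?_⟩
  intro ε e0 hε φ hφ hn x hx hx1 τ hτ
  obtain ⟨ψ, c, hP⟩ := exists_core a0 a1 e0 hcstar hW hlow hφ hn
  have h := c.final ha hm0 (c.bdα ha hε hR hRR) hx hx1 hτ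
  rw [hP x hx, hP (x + τ) (by linarith)]
  constructor
  · intro hxτ
    rw [min_eq_right hxτ, mul_assoc, ← Real.rpow_add_one hx.ne'] at h
    convert h using 3
    ring
  · intro hxτ
    rwa [min_eq_left hxτ] at h
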